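/- Let ρ, σ ∈ ℝ satisfy 1 − σ² > 0 and 1 − 2ρ² + σ > 0, and set ξ = 1 − 2ρ² + σ, η = (1+σ)/(1−σ), λ = 1/√(1−σ), κ = 1/√(1−2ρ²+σ), δ = 2ρ/ξ, α = √(2η)/ξ, Q(x,y) = (1−ρ²)x² − 2(σ−ρ²)xy + (1−ρ²)y². Then for all (x,y) ∈ ℝ² with (x,y) ≠ (0,0), the iterated integral (√2·λ³κ³/(2π)²) ∫_ℝ ∫_ℝ exp(−i((x+y)/2)s − i((−x+y)/2)t)·[λ²(s−iδ)² + κ²t² + α²]^{−3/2} dt ds equals (1/(2π√(1−σ²)))·exp((ρx + ρy − √η·√(Q(x,y)))/ξ), where complex powers are principal branch. -/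

import Mathlib

open MeasureTheory

open ProbabilityTheory Filter Topology Module
open scoped Real RealInnerProductSpace

/-!
The quadratic form with imaginary shift has positive real part, so a Gamma integral writes its power
`-(n + 1) / 2` as a mixture over `u > 0` of Gaussians on an `n`-dimensional space. After swapping
the integrals, the Fourier transforms of these Gaussians leave a multiple of
`∫ u ^ (-1/2) * exp (-(A² u + ‖w‖² / (4 u))) du`, whatever `n` is; for `u = v²` the exponent is a
complete square up to a constant, and the Cauchy–Schlömilch substitution evaluates it. The integral
of the theorem is the case `n = 2` after rescaling the two coordinates.
-/

section CauchySchlomilch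

variable {a b : ℝ}

/-- The inverse of the Cauchy–Schlömilch map `v ↦ a * v - b / v` on `(0, ∞)`, that is, the positive
root of `a * v ^ 2 - x * v - b`. -/
noncomputable def schlomilchInv (a b x : ℝ) : ℝ :=
  (x + √(x ^ 2 + 4 * (a * b))) / (2 * a)

lemma abs_lt_sqrt_sq_add {c : ℝ} (hc : 0 < c) (x : ℝ) : |x| < √(x ^ 2 + c) :=
  Real.lt_sqrt_of_sq_lt (by linarith [sq_abs x])

lemma schlomilchInv_pos (ha : 0 < a) (hb : 0 < b) (x : ℝ) : 0 < schlomilchInv a b x := by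
  have := neg_lt_of_abs_lt (abs_lt_sqrt_sq_add (by positivity : 0 < 4 * (a * b)) x)
  exact div_pos (by linarith) (by positivity)

lemma mul_schlomilchInv_sub_div (ha : 0 < a) (hb : 0 < b) (x : ℝ) :
    a * schlomilchInv a b x - b / schlomilchInv a b x = x := by
  have hroot : a * schlomilchInv a b x ^ 2 - x * schlomilchInv a b x - b = 0 := by
    have hsq : √(x ^ 2 + 4 * (a * b)) ^ 2 = x ^ 2 + 4 * (a * b) := Real.sq_sqrt (by positivity)
    rw [schlomilchInv]
    field_simp
    rw [show a * 4 * b = 4 * (a * b) by ring]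
    linear_combination hsq
  have := (schlomilchInv_pos ha hb x).ne'
  field_simp
  linear_combination hroot

lemma schlomilchInv_mul_sub_div (ha : 0 < a) (hb : 0 < b) {v : ℝ} (hv : 0 < v) :
    schlomilchInv a b (a * v - b / v) = v := by
  have hsq : (a * v - b / v) ^ 2 + 4 * (a * b) = (a * v + b / v) ^ 2 := by
    field_simp
    ring
  rw [schlomilchInv, hsq, Real.sqrt_sq (by positivity)]
  field_simp
  ring

lemma range_schlomilchInv (ha : 0 < a) (hb : 0 < b) :
    Set.range (schlomilchInv a b) = Set.Ioi 0 :=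
  Set.Subset.antisymm (Set.range_subset_iff.2 (schlomilchInv_pos ha hb))
    fun _ hv => ⟨_, schlomilchInv_mul_sub_div ha hb hv⟩

lemma hasDerivAt_schlomilchInv (ha : 0 < a) (hb : 0 < b) (x : ℝ) :
    HasDerivAt (schlomilchInv a b) ((1 + x / √(x ^ 2 + 4 * (a * b))) / (2 * a)) x := by
  have h := (((hasDerivAt_id x).add ((((hasDerivAt_pow 2 x).add_const (4 * (a * b))).sqrt
    (by positivity)))).div_const (2 * a))
  refine h.congr_deriv ?_
  simp [field]

variable {E : Type*} [NormedAddCommGroup E] [NormedSpace ℝ E]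

lemma integral_eq_zero_of_odd {G : Type*} [AddGroup G] [MeasurableSpace G]
    [MeasurableNeg G] {μ : Measure G} [μ.IsNegInvariant] {g : G → E} (hg : g.Odd) :
    ∫ x, g x ∂μ = 0 := by
  have h := integral_neg_eq_self g μ
  simp only [hg _, integral_neg] at h
  have := IsAddTorsionFree.of_isTorsionFree ℝ E
  exact neg_eq_self.1 h

theorem integral_comp_mul_sub_div_Ioi (ha : 0 < a) (hb : 0 < b) {g : ℝ → E}
    (hg : Integrable g) (heven : g.Even) :
    ∫ v in Set.Ioi 0, g (a * v - b / v) = (2 * a)⁻¹ • ∫ x, g x := by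
  have hc : 0 < 4 * (a * b) := by positivity
  have hslope (x : ℝ) : |x / √(x ^ 2 + 4 * (a * b))| < 1 := by
    rw [abs_div, abs_of_nonneg (Real.sqrt_nonneg _), div_lt_one (by positivity)]
    exact abs_lt_sqrt_sq_add hc x
  have hcov := integral_image_eq_integral_abs_deriv_smul MeasurableSet.univ
    (fun x _ => (hasDerivAt_schlomilchInv ha hb x).hasDerivWithinAt)
    (Function.LeftInverse.injective (g := fun v => a * v - b / v)
      (mul_schlomilchInv_sub_div ha hb)).injOn
    fun v => g (a * v - b / v)
  rw [Set.image_univ, range_schlomilchInv ha hb, setIntegral_univ] at hcov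
  -- Only the even part of the Jacobian of the inverse contributes.
  have hodd : ∫ x, (x / √(x ^ 2 + 4 * (a * b))) • g x = 0 :=
    integral_eq_zero_of_odd fun x => by rw [heven, neg_sq, neg_div, neg_smul]
  have hint : Integrable fun x => (x / √(x ^ 2 + 4 * (a * b))) • g x :=
    hg.bdd_smul 1 (Measurable.aestronglyMeasurable (by fun_prop))
      (.of_forall fun x => (hslope x).le)
  calc ∫ v in Set.Ioi 0, g (a * v - b / v)
      = ∫ x, (2 * a)⁻¹ • (g x + (x / √(x ^ 2 + 4 * (a * b))) • g x) := by
        rw [hcov]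
        congr 1 with x
        have : 0 ≤ 1 + x / √(x ^ 2 + 4 * (a * b)) := by linarith [neg_lt_of_abs_lt (hslope x)]
        rw [mul_schlomilchInv_sub_div ha hb, abs_of_nonneg (by positivity), div_eq_inv_mul,
          mul_smul, add_smul, one_smul]
    _ = (2 * a)⁻¹ • ∫ x, g x := by rw [integral_smul, integral_add hg hint, hodd, add_zero]

end CauchySchlomilch

lemma integral_exp_neg_mul_sq_add_div_sq_Ioi {a b : ℝ} (ha : 0 < a) (hb : 0 ≤ b) :
    ∫ v in Set.Ioi (0 : ℝ), Real.exp (-(a ^ 2 * v ^ 2 + b ^ 2 / v ^ 2)) =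
      √π / (2 * a) * Real.exp (-(2 * a * b)) := by
  rcases hb.eq_or_lt with rfl | hb
  · have h := integral_gaussian_Ioi (a ^ 2)
    rw [Real.sqrt_div Real.pi_pos.le, Real.sqrt_sq ha.le, div_div, mul_comm a] at h
    simpa using h
  have hsquare : ∀ v ∈ Set.Ioi (0 : ℝ), Real.exp (-(a ^ 2 * v ^ 2 + b ^ 2 / v ^ 2)) =
      Real.exp (-(2 * a * b)) * Real.exp (-1 * (a * v - b / v) ^ 2) := by
    intro v (hv : 0 < v)
    rw [← Real.exp_add]
    congr 1
    field_simp
    ring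
  rw [setIntegral_congr_fun measurableSet_Ioi hsquare, integral_const_mul,
    integral_comp_mul_sub_div_Ioi ha hb (integrable_exp_neg_mul_sq one_pos)
      fun x => by rw [neg_sq], integral_gaussian, div_one, smul_eq_mul]
  ring

lemma integral_rpow_neg_half_mul_exp_neg_mul_add_div_Ioi {a b : ℝ} (ha : 0 < a) (hb : 0 ≤ b) :
    ∫ u in Set.Ioi (0 : ℝ), u ^ (-(1 / 2) : ℝ) * Real.exp (-(a ^ 2 * u + b ^ 2 / u)) =
      √π / a * Real.exp (-(2 * a * b)) := by
  rw [← integral_comp_rpow_Ioi_of_pos two_pos]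
  have hsubst : ∀ v ∈ Set.Ioi (0 : ℝ), ((2 : ℝ) * v ^ ((2 : ℝ) - 1)) •
      ((v ^ (2 : ℝ)) ^ (-(1 / 2) : ℝ) *
        Real.exp (-(a ^ 2 * v ^ (2 : ℝ) + b ^ 2 / v ^ (2 : ℝ)))) =
      2 * Real.exp (-(a ^ 2 * v ^ 2 + b ^ 2 / v ^ 2)) := by
    intro v (hv : 0 < v)
    rw [← Real.rpow_mul hv.le, smul_eq_mul, Real.rpow_two, mul_assoc, ← mul_assoc (v ^ _),
      ← Real.rpow_add hv]
    norm_num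
  rw [setIntegral_congr_fun measurableSet_Ioi hsubst, integral_const_mul,
    integral_exp_neg_mul_sq_add_div_sq_Ioi ha hb]
  field_simp

lemma integrableOn_rpow_mul_exp_neg_mul {s c : ℝ} (hs : -1 < s) (hc : 0 < c) :
    IntegrableOn (fun u : ℝ => u ^ s * Real.exp (-(c * u))) (Set.Ioi 0) := by
  simpa using integrableOn_rpow_mul_exp_neg_mul_rpow hs one_pos hc

lemma eqOn_re_pos_of_forall_ofReal {f g : ℂ → ℂ} (hf : DifferentiableOn ℂ f {z | 0 < z.re})
    (hg : DifferentiableOn ℂ g {z | 0 < z.re}) (hfg : ∀ x : ℝ, 0 < x → f x = g x) :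
    Set.EqOn f g {z | 0 < z.re} := by
  have hopen : IsOpen {z : ℂ | 0 < z.re} := isOpen_lt continuous_const Complex.continuous_re
  refine (hf.analyticOnNhd hopen).eqOn_of_preconnected_of_frequently_eq (z₀ := ((1 : ℝ) : ℂ))
    (hg.analyticOnNhd hopen) (convex_halfSpace_re_gt 0).isPreconnected (by simp) ?_
  have hcoe : Tendsto (fun x : ℝ => (x : ℂ)) (𝓝[≠] 1) (𝓝[≠] ((1 : ℝ) : ℂ)) :=
    Complex.continuous_ofReal.continuousAt.continuousWithinAt.tendsto_nhdsWithin
      fun _ hx => Complex.ofReal_injective.ne hx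
  refine hcoe.frequently (Eventually.frequently ?_)
  filter_upwards [nhdsWithin_le_nhds (Ioi_mem_nhds one_pos)] with x hx using hfg x hx

lemma differentiableOn_integral_rpow_mul_cexp_neg_mul {r : ℝ} (hr : 0 < r) :
    DifferentiableOn ℂ (fun z : ℂ => ∫ u in Set.Ioi (0 : ℝ), ((u ^ (r - 1) : ℝ) : ℂ) *
      Complex.exp (-(z * u))) {z | 0 < z.re} := by
  let μ := (volume.restrict (Set.Ioi (0 : ℝ))).withDensity fun u => ENNReal.ofReal (u ^ (r - 1))
  have hdens {u : ℝ} (hu : u ∈ Set.Ioi (0 : ℝ)) :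
      (ENNReal.ofReal (u ^ (r - 1))).toReal = u ^ (r - 1) :=
    ENNReal.toReal_ofReal (Real.rpow_nonneg (le_of_lt hu) _)
  have hdom : Set.Iio 0 ⊆ interior (integrableExpSet id μ) := by
    refine isOpen_Iio.subset_interior_iff.2 fun t (ht : t < 0) => ?_
    refine (integrable_withDensity_iff_integrable_smul' (by fun_prop) (by simp)).2 ?_
    refine (integrableOn_congr_fun (fun u hu => ?_) measurableSet_Ioi).2
      (integrableOn_rpow_mul_exp_neg_mul (by linarith : -1 < r - 1) (neg_pos.2 ht))
    simp [hdens hu]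
  have hmgf := (differentiableOn_complexMGF (X := id) (μ := μ)).comp
    (differentiableOn_neg {z : ℂ | 0 < z.re}) fun z (hz : 0 < z.re) => hdom (by simpa using hz)
  refine hmgf.congr fun z _ => ?_
  rw [Function.comp_apply, complexMGF,
    integral_withDensity_eq_integral_toReal_smul (by fun_prop) (by simp)]
  refine setIntegral_congr_fun measurableSet_Ioi fun u hu => ?_
  simp [hdens hu]

lemma integral_rpow_mul_cexp_neg_mul_Ioi {r : ℝ} (hr : 0 < r) {z : ℂ} (hz : 0 < z.re) :
    ∫ u in Set.Ioi (0 : ℝ), ((u ^ (r - 1) : ℝ) : ℂ) * Complex.exp (-(z * u)) =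
      (Real.Gamma r : ℂ) * z ^ (-r : ℂ) := by
  refine eqOn_re_pos_of_forall_ofReal (differentiableOn_integral_rpow_mul_cexp_neg_mul hr)
    (g := fun z => (Real.Gamma r : ℂ) * z ^ (-r : ℂ)) ?_ (fun x hx => ?_) hz
  · exact fun z hz =>
      ((differentiableAt_id.cpow_const (.inl hz)).const_mul _).differentiableWithinAt
  · rw [← Complex.ofReal_neg r, ← Complex.ofReal_cpow hx.le, ← Complex.ofReal_mul, mul_comm,
      Real.rpow_neg hx.le, ← Real.inv_rpow hx.le, ← one_div,
      ← Real.integral_rpow_mul_exp_neg_mul_Ioi hr hx, ← integral_complex_ofReal]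
    simp

lemma rpow_mul_div_rpow_half {c u : ℝ} (hc : 0 ≤ c) (hu : 0 < u) (s : ℝ) :
    u ^ ((s - 1) / 2) * (c / u) ^ (s / 2) = c ^ (s / 2) * u ^ (-(1 / 2) : ℝ) := by
  rw [Real.div_rpow hc hu.le, mul_div_left_comm, ← Real.rpow_sub hu]
  ring_nf

section PoissonKernel

variable {V : Type*} [NormedAddCommGroup V] [InnerProductSpace ℝ V]

/-- The square of `v - i d` for the complex bilinear extension of the inner product. -/
noncomputable def imShiftSq (d v : V) : ℂ :=
  ((‖v‖ ^ 2 - ‖d‖ ^ 2 : ℝ) : ℂ) - 2 * Complex.I * ⟪d, v⟫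

lemma imShiftSq_add_sq_re (A : ℝ) (d v : V) :
    (imShiftSq d v + (A : ℂ) ^ 2).re = ‖v‖ ^ 2 + (A ^ 2 - ‖d‖ ^ 2) := by
  rw [imShiftSq, Complex.add_re, Complex.sub_re, ← Complex.ofReal_pow, Complex.ofReal_re,
    Complex.ofReal_re, show (2 * Complex.I * ⟪d, v⟫ : ℂ).re = 0 by simp]
  ring

/-- The Gaussian of rate `u` centred at `i d`, with mass factor `exp (-A² u)` and character of
frequency `w`. Its Mellin transform in `u` is `shiftedPoisson A d w`. -/
noncomputable def shiftedGaussian (A : ℝ) (d w : V) (u : ℝ) (v : V) : ℂ :=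
  Complex.exp (-((imShiftSq d v + (A : ℂ) ^ 2) * u)) * Complex.exp (-(Complex.I * ⟪w, v⟫))

/-- The unnormalised Poisson kernel `(‖v‖² + A²) ^ (-(dim V + 1) / 2)` of the half-space over `V`,
centred at `i d` and multiplied by the character of frequency `w`. -/
noncomputable def shiftedPoisson (A : ℝ) (d w v : V) : ℂ :=
  Complex.exp (-(Complex.I * ⟪w, v⟫)) *
    (imShiftSq d v + (A : ℂ) ^ 2) ^ (-(((finrank ℝ V + 1) / 2 : ℝ) : ℂ))

variable {A : ℝ} {d : V}

lemma integral_rpow_mul_shiftedGaussian_Ioi (hd : ‖d‖ < A) (w v : V) :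
    ∫ u in Set.Ioi (0 : ℝ), ((u ^ ((finrank ℝ V - 1) / 2 : ℝ) : ℝ) : ℂ) *
      shiftedGaussian A d w u v =
      (Real.Gamma ((finrank ℝ V + 1) / 2) : ℂ) * shiftedPoisson A d w v := by
  have hre : 0 < (imShiftSq d v + (A : ℂ) ^ 2).re := by
    rw [imShiftSq_add_sq_re]
    linarith [sq_nonneg ‖v‖, pow_lt_pow_left₀ hd (norm_nonneg d) two_ne_zero]
  have h := integral_rpow_mul_cexp_neg_mul_Ioi (r := (finrank ℝ V + 1) / 2) (by positivity) hre
  rw [shiftedPoisson, mul_left_comm, ← h, ← integral_const_mul]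
  congr 1 with u
  rw [shiftedGaussian, show ((finrank ℝ V : ℝ) + 1) / 2 - 1 = (finrank ℝ V - 1) / 2 by ring]
  ring

lemma norm_shiftedGaussian (A : ℝ) (d w : V) (u : ℝ) (v : V) :
    ‖shiftedGaussian A d w u v‖ =
      Real.exp (-u * ‖v‖ ^ 2) * Real.exp (-((A ^ 2 - ‖d‖ ^ 2) * u)) := by
  rw [shiftedGaussian, norm_mul, Complex.norm_exp, Complex.norm_exp, Complex.neg_re,
    Complex.re_mul_ofReal, imShiftSq_add_sq_re, ← Real.exp_add, ← Real.exp_add]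
  congr 1
  simp only [Complex.neg_re, Complex.mul_re, Complex.I_re, Complex.I_im, Complex.ofReal_re,
    Complex.ofReal_im]
  ring

lemma shiftedGaussian_eq_cexp (A : ℝ) (d w : V) (u : ℝ) (v : V) :
    shiftedGaussian A d w u v = Complex.exp (((‖d‖ ^ 2 - A ^ 2) * u : ℝ)) *
      Complex.exp (-(u : ℂ) * ‖v‖ ^ 2 + Complex.I * ⟪(2 * u) • d - w, v⟫) := by
  rw [shiftedGaussian, imShiftSq, ← Complex.exp_add, ← Complex.exp_add, inner_sub_left,
    real_inner_smul_left]
  push_cast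
  ring_nf

variable [FiniteDimensional ℝ V] [MeasurableSpace V] [BorelSpace V]

lemma integrable_shiftedGaussian (A : ℝ) (d w : V) {u : ℝ} (hu : 0 < u) :
    Integrable (shiftedGaussian A d w u) := by
  simp only [funext (shiftedGaussian_eq_cexp A d w u)]
  exact (GaussianFourier.integrable_cexp_neg_mul_sq_norm_add (by simpa using hu) _ _).const_mul _

lemma integral_shiftedGaussian (A : ℝ) (d w : V) {u : ℝ} (hu : 0 < u) :
    ∫ v, shiftedGaussian A d w u v = (((π / u) ^ (finrank ℝ V / 2 : ℝ) *
      Real.exp (⟪d, w⟫ - (A ^ 2 * u + (‖w‖ / 2) ^ 2 / u)) : ℝ) : ℂ) := by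
  have hnorm : ‖(2 * u) • d - w‖ ^ 2 = 4 * u ^ 2 * ‖d‖ ^ 2 - 4 * u * ⟪d, w⟫ + ‖w‖ ^ 2 := by
    rw [norm_sub_sq_real, norm_smul, real_inner_smul_left, mul_pow, Real.norm_eq_abs, sq_abs]
    ring
  simp only [shiftedGaussian_eq_cexp A d w u]
  rw [integral_const_mul, GaussianFourier.integral_cexp_neg_mul_sq_norm_add (by simpa using hu),
    ← Complex.ofReal_pow, hnorm, Complex.I_sq, mul_left_comm, ← Complex.exp_add,
    Complex.ofReal_mul ((π / u) ^ _), Complex.ofReal_cpow (by positivity), Complex.ofReal_exp]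
  have hu' : (u : ℂ) ≠ 0 := Complex.ofReal_ne_zero.2 hu.ne'
  push_cast
  congr 2
  field_simp
  ring

lemma integrable_rpow_mul_shiftedGaussian (hd : ‖d‖ < A) (w : V) :
    Integrable (fun p : V × ℝ => ((p.2 ^ ((finrank ℝ V - 1) / 2 : ℝ) : ℝ) : ℂ) *
      shiftedGaussian A d w p.2 p.1)
      ((volume : Measure V).prod (volume.restrict (Set.Ioi 0))) := by
  have hmeas : Measurable fun p : V × ℝ => ((p.2 ^ ((finrank ℝ V - 1) / 2 : ℝ) : ℝ) : ℂ) *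
      shiftedGaussian A d w p.2 p.1 := by
    unfold shiftedGaussian imShiftSq
    fun_prop
  refine (integrable_prod_iff' hmeas.aestronglyMeasurable).2 ⟨?_, ?_⟩
  · filter_upwards [ae_restrict_mem measurableSet_Ioi] with u hu
    exact (integrable_shiftedGaussian A d w hu).const_mul _
  · refine (integrableOn_congr_fun (fun u (hu : 0 < u) => ?_) measurableSet_Ioi).2
      ((integrableOn_rpow_mul_exp_neg_mul (s := -(1 / 2)) (by norm_num)
        (sub_pos.2 (pow_lt_pow_left₀ hd (norm_nonneg d) two_ne_zero))).const_mul
          (π ^ (finrank ℝ V / 2 : ℝ)))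
    simp only [norm_mul, norm_shiftedGaussian, Complex.norm_real]
    rw [integral_const_mul, integral_mul_const, GaussianFourier.integral_rexp_neg_mul_sq_norm hu,
      Real.norm_of_nonneg (by positivity), ← mul_assoc, rpow_mul_div_rpow_half Real.pi_pos.le hu,
      mul_assoc]

lemma integrable_shiftedPoisson (hd : ‖d‖ < A) (w : V) :
    Integrable (shiftedPoisson A d w) := by
  have h := (integrable_rpow_mul_shiftedGaussian hd w).integral_prod_left
  simp only [integral_rpow_mul_shiftedGaussian_Ioi hd] at h
  have hΓ : (Real.Gamma ((finrank ℝ V + 1) / 2) : ℂ) ≠ 0 :=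
    Complex.ofReal_ne_zero.2 (Real.Gamma_pos_of_pos (by positivity)).ne'
  simpa [hΓ] using h.const_mul (Real.Gamma ((finrank ℝ V + 1) / 2) : ℂ)⁻¹

theorem integral_shiftedPoisson (hd : ‖d‖ < A) (w : V) :
    ∫ v, shiftedPoisson A d w v =
      ((π ^ ((finrank ℝ V + 1) / 2 : ℝ) / (Real.Gamma ((finrank ℝ V + 1) / 2) * A) *
        Real.exp (⟪d, w⟫ - A * ‖w‖) : ℝ) : ℂ) := by
  have hΓ : (Real.Gamma ((finrank ℝ V + 1) / 2) : ℂ) ≠ 0 :=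
    Complex.ofReal_ne_zero.2 (Real.Gamma_pos_of_pos (by positivity)).ne'
  have hA : 0 < A := (norm_nonneg d).trans_lt hd
  have hinner : ∀ u ∈ Set.Ioi (0 : ℝ), ∫ v, ((u ^ ((finrank ℝ V - 1) / 2 : ℝ) : ℝ) : ℂ) *
      shiftedGaussian A d w u v = ((π ^ (finrank ℝ V / 2 : ℝ) * Real.exp ⟪d, w⟫ *
        (u ^ (-(1 / 2) : ℝ) * Real.exp (-(A ^ 2 * u + (‖w‖ / 2) ^ 2 / u))) : ℝ) : ℂ) := by
    intro u (hu : 0 < u)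
    rw [integral_const_mul, integral_shiftedGaussian A d w hu, ← Complex.ofReal_mul, ← mul_assoc,
      rpow_mul_div_rpow_half Real.pi_pos.le hu, sub_eq_add_neg, Real.exp_add]
    congr 1
    ring
  have hpi : π ^ (finrank ℝ V / 2 : ℝ) * √π = π ^ ((finrank ℝ V + 1) / 2 : ℝ) := by
    rw [Real.sqrt_eq_rpow, ← Real.rpow_add Real.pi_pos]
    ring_nf
  refine mul_left_cancel₀ hΓ ?_
  calc (Real.Gamma ((finrank ℝ V + 1) / 2) : ℂ) * ∫ v, shiftedPoisson A d w v
      = ∫ v, ∫ u in Set.Ioi (0 : ℝ), ((u ^ ((finrank ℝ V - 1) / 2 : ℝ) : ℝ) : ℂ) *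
          shiftedGaussian A d w u v := by
        simp only [integral_rpow_mul_shiftedGaussian_Ioi hd, integral_const_mul]
    _ = ∫ u in Set.Ioi (0 : ℝ), ∫ v, ((u ^ ((finrank ℝ V - 1) / 2 : ℝ) : ℝ) : ℂ) *
          shiftedGaussian A d w u v :=
        integral_integral_swap (integrable_rpow_mul_shiftedGaussian hd w)
    _ = ((π ^ (finrank ℝ V / 2 : ℝ) * Real.exp ⟪d, w⟫ *
          (√π / A * Real.exp (-(2 * A * (‖w‖ / 2)))) : ℝ) : ℂ) := by
        rw [setIntegral_congr_fun measurableSet_Ioi hinner, integral_complex_ofReal,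
          integral_const_mul, integral_rpow_neg_half_mul_exp_neg_mul_add_div_Ioi hA (by positivity)]
    _ = _ := by
        rw [← Complex.ofReal_mul, ← hpi, sub_eq_add_neg, Real.exp_add]
        congr 1
        have := Complex.ofReal_ne_zero.1 hΓ
        field_simp

end PoissonKernel

section Plane

variable {E : Type*} [NormedAddCommGroup E] [NormedSpace ℝ E]

lemma integral_integral_comp_complex_mk_mul {f : ℂ → E} (hf : Integrable f) (l k : ℝ) :
    ∫ s : ℝ, ∫ t : ℝ, f ⟨l * s, k * t⟩ = |(l * k)⁻¹| • ∫ z, f z := by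
  have hvp := Complex.volume_preserving_equiv_real_prod.symm
  have hemb := Complex.measurableEquivRealProd.symm.measurableEmbedding
  have hprod : ∫ x : ℝ, ∫ y : ℝ, f ⟨x, y⟩ = ∫ z, f z :=
    (integral_prod _ ((hvp.integrable_comp_emb hemb).2 hf)).symm.trans (hvp.integral_comp hemb f)
  have hinner (s : ℝ) : ∫ t : ℝ, f ⟨l * s, k * t⟩ = |k⁻¹| • ∫ y : ℝ, f ⟨l * s, y⟩ :=
    Measure.integral_comp_mul_left (fun y => f ⟨l * s, y⟩) k
  simp only [hinner, integral_smul]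
  rw [Measure.integral_comp_mul_left (fun x => ∫ y : ℝ, f ⟨x, y⟩), hprod, smul_smul, ← abs_mul,
    ← mul_inv, mul_comm k]

lemma complex_inner_mk (x y x' y' : ℝ) : ⟪(⟨x, y⟩ : ℂ), ⟨x', y'⟩⟫ = x * x' + y * y' := by
  simp [Complex.inner, mul_comm]

lemma shiftedPoisson_complex (A l k d a b s t : ℝ) (hl : l ≠ 0) (hk : k ≠ 0) :
    shiftedPoisson A (⟨l * d, 0⟩ : ℂ) ⟨a / l, b / k⟩ ⟨l * s, k * t⟩ =
      Complex.exp (-Complex.I * a * s - Complex.I * b * t) *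
        ((l : ℂ) ^ 2 * (s - Complex.I * d) ^ 2 + (k : ℂ) ^ 2 * (t : ℂ) ^ 2 + (A : ℂ) ^ 2) ^
          (-(3 : ℂ) / 2) := by
  have hinner : ⟪(⟨a / l, b / k⟩ : ℂ), ⟨l * s, k * t⟩⟫ = a * s + b * t := by
    rw [complex_inner_mk]
    field_simp
  have hsq : imShiftSq (⟨l * d, 0⟩ : ℂ) ⟨l * s, k * t⟩ =
      (l : ℂ) ^ 2 * (s - Complex.I * d) ^ 2 + (k : ℂ) ^ 2 * (t : ℂ) ^ 2 := by
    simp only [imShiftSq, complex_inner_mk, Complex.sq_norm, Complex.normSq_mk]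
    push_cast
    linear_combination (-(l : ℂ) ^ 2 * d ^ 2) * Complex.I_sq
  rw [shiftedPoisson, hinner, hsq, Complex.finrank_real_complex]
  congr 2
  · push_cast
    ring
  · norm_num

theorem integral_integral_cexp_mul_cpow_neg_three_halves {A l k d : ℝ} (hl : 0 < l) (hk : 0 < k)
    (hd : |l * d| < A) (a b : ℝ) :
    ∫ s : ℝ, ∫ t : ℝ, Complex.exp (-Complex.I * a * s - Complex.I * b * t) *
        ((l : ℂ) ^ 2 * (s - Complex.I * d) ^ 2 + (k : ℂ) ^ 2 * (t : ℂ) ^ 2 + (A : ℂ) ^ 2) ^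
          (-(3 : ℂ) / 2) =
      ((2 * π / (l * k * A) * Real.exp (a * d - A * √((a / l) ^ 2 + (b / k) ^ 2)) : ℝ) : ℂ) := by
  have hnorm (x y : ℝ) : ‖(⟨x, y⟩ : ℂ)‖ = √(x ^ 2 + y ^ 2) := by
    rw [Complex.norm_eq_sqrt_sq_add_sq]
  have hshift : ‖(⟨l * d, 0⟩ : ℂ)‖ < A := by
    rw [hnorm]
    simpa [Real.sqrt_sq_eq_abs] using hd
  have hinner : ⟪(⟨l * d, 0⟩ : ℂ), ⟨a / l, b / k⟩⟫ = a * d := by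
    rw [complex_inner_mk]
    field_simp
    ring
  have hpi : π ^ ((2 + 1) / 2 : ℝ) = π * √π := by
    rw [Real.sqrt_eq_rpow, ← Real.rpow_one_add' Real.pi_pos.le (by norm_num)]
    norm_num
  have hΓ : Real.Gamma ((2 + 1) / 2) = √π / 2 := by
    rw [show ((2 : ℝ) + 1) / 2 = 1 / 2 + 1 by norm_num, Real.Gamma_add_one (by norm_num),
      Real.Gamma_one_half_eq]
    ring
  simp only [← shiftedPoisson_complex A l k d a b _ _ hl.ne' hk.ne']
  rw [integral_integral_comp_complex_mk_mul (integrable_shiftedPoisson hshift _),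
    integral_shiftedPoisson hshift, hinner, hnorm, Complex.finrank_real_complex, Nat.cast_ofNat,
    hpi, hΓ, abs_of_pos (by positivity), Complex.real_smul, ← Complex.ofReal_mul]
  congr 1
  field_simp

end Plane

section Parameters

variable {ρ σ : ℝ}

lemma abs_scaled_shift_lt (hσ : 0 < 1 - σ) (hξ : 0 < 1 - 2 * ρ ^ 2 + σ) :
    |1 / √(1 - σ) * (2 * ρ / (1 - 2 * ρ ^ 2 + σ))| <
      √(2 * ((1 + σ) / (1 - σ))) / (1 - 2 * ρ ^ 2 + σ) := by
  rw [← mul_div_assoc, abs_div, abs_of_pos hξ, ← mul_div_assoc, Real.sqrt_div' _ hσ.le,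
    one_div_mul_eq_div, abs_div, abs_of_nonneg (Real.sqrt_nonneg _)]
  gcongr
  exact Real.lt_sqrt_of_sq_lt (by rw [sq_abs]; linarith)

lemma scaled_frequency_sq_add_sq (hσ : 0 ≤ 1 - σ) (hξ : 0 ≤ 1 - 2 * ρ ^ 2 + σ) (x y : ℝ) :
    ((x + y) / 2 / (1 / √(1 - σ))) ^ 2 + ((-x + y) / 2 / (1 / √(1 - 2 * ρ ^ 2 + σ))) ^ 2 =
      ((1 - ρ ^ 2) * x ^ 2 - 2 * (σ - ρ ^ 2) * x * y + (1 - ρ ^ 2) * y ^ 2) / 2 := by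
  simp only [div_div_eq_mul_div, div_one, mul_pow, div_pow, Real.sq_sqrt hσ, Real.sq_sqrt hξ]
  ring

lemma density_exponent_eq (ρ ξ η q x y : ℝ) :
    (x + y) / 2 * (2 * ρ / ξ) - √(2 * η) / ξ * √(q / 2) =
      (ρ * x + ρ * y - √η * √q) / ξ := by
  rw [Real.sqrt_mul two_pos.le, Real.sqrt_div' _ two_pos.le]
  field_simp

lemma density_normalization_eq (hσ : 0 < 1 - σ) (hσ' : 0 < 1 + σ) {ξ : ℝ} (hξ : 0 < ξ) :
    √2 * (1 / √(1 - σ)) ^ 3 * (1 / √ξ) ^ 3 / (2 * π) ^ 2 *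
      (2 * π / (1 / √(1 - σ) * (1 / √ξ) * (√(2 * ((1 + σ) / (1 - σ))) / ξ))) =
    1 / (2 * π * √(1 - σ ^ 2)) := by
  obtain ⟨r, hr, rfl⟩ : ∃ r : ℝ, 0 < r ∧ ξ = r ^ 2 :=
    ⟨√ξ, Real.sqrt_pos.2 hξ, (Real.sq_sqrt hξ.le).symm⟩
  rw [show 1 - σ ^ 2 = (1 - σ) * (1 + σ) by ring, Real.sqrt_mul hσ.le, Real.sqrt_mul two_pos.le,
    Real.sqrt_div hσ'.le, Real.sqrt_sq hr.le]
  field_simp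

end Parameters

theorem joint_density_n_three (ρ σ : ℝ) (h1 : 1 - σ ^ 2 > 0) (h2 : 1 - 2 * ρ ^ 2 + σ > 0)
    (ξ η lam kap δ α : ℝ) (hξ : ξ = 1 - 2 * ρ ^ 2 + σ) (hη : η = (1 + σ) / (1 - σ))
    (hlam : lam = 1 / Real.sqrt (1 - σ)) (hkap : kap = 1 / Real.sqrt (1 - 2 * ρ ^ 2 + σ))
    (hδ : δ = 2 * ρ / ξ) (hα : α = Real.sqrt (2 * η) / ξ) :
    ∀ x y : ℝ, (x, y) ≠ (0, 0) →
      ((Real.sqrt 2 * lam ^ 3 * kap ^ 3 / (2 * Real.pi) ^ 2 : ℝ) : ℂ) *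
        (∫ s : ℝ, ∫ t : ℝ,
          Complex.exp (-Complex.I * (((x : ℂ) + y) / 2) * s -
              Complex.I * ((-(x : ℂ) + y) / 2) * t) *
            ((lam : ℂ) ^ 2 * ((s : ℂ) - Complex.I * δ) ^ 2 + (kap : ℂ) ^ 2 * (t : ℂ) ^ 2 +
              (α : ℂ) ^ 2) ^ (-(3 : ℂ) / 2)) =
      ((1 / (2 * Real.pi * Real.sqrt (1 - σ ^ 2)) *
          Real.exp ((ρ * x + ρ * y - Real.sqrt η *
            Real.sqrt ((1 - ρ ^ 2) * x ^ 2 - 2 * (σ - ρ ^ 2) * x * y +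
              (1 - ρ ^ 2) * y ^ 2)) / ξ) : ℝ) : ℂ) := by
  intro x y _
  subst hξ hη hlam hkap hδ hα
  have hσ' : 0 < 1 + σ := by nlinarith
  have hσ : 0 < 1 - σ := by nlinarith
  have hkap : 0 < 1 / √(1 - 2 * ρ ^ 2 + σ) := by positivity
  have h := integral_integral_cexp_mul_cpow_neg_three_halves (by positivity) hkap
    (abs_scaled_shift_lt hσ h2) ((x + y) / 2) ((-x + y) / 2)
  rw [scaled_frequency_sq_add_sq hσ.le h2.le, density_exponent_eq] at h
  rw [← density_normalization_eq hσ hσ' h2, mul_assoc (_ / (2 * π) ^ 2), Complex.ofReal_mul, ← h]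
  push_cast
  rfl
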